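/- Let μ ∈ ℝ, U₀ ∈ ℝ, and let U : ℝ × ℝ → ℝ be a smooth solution of the EW equation ∂ₜU + U·∂ₓU − μ·∂ₓ∂ₓ∂ₜU = 0. Fix t ∈ ℝ and assume: (i) x ↦ ∂ₜU(x,t), x ↦ ∂ₓ∂ₓ∂ₜU(x,t) and x ↦ U(x,t)²·∂ₜU(x,t) are integrable on ℝ; (ii) U(x,t) → U₀ as x → −∞ and U(x,t) → 0 as x → +∞; (iii) ∂ₜU(x,t) → 0 and ∂ₓ∂ₜU(x,t) → 0 as x → ±∞; (iv) the antiderivative g(x) = ∫_{−∞}^{x} ( ∂ₜU(y,t) − μ·∂ₓ∂ₓ∂ₜU(y,t) ) dy satisfies g(x) = (U₀² − U(x,t)²)/2 for all x. Then ∫_{−∞}^{∞} 3·U(x,t)²·∂ₜU(x,t) dx = (3/4)·U₀⁴; that is, in the undular bore setting the third invariant I₃ = ∫ U³ dx increases at the constant rate M₃ = (3/4)U₀⁴. -/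

import Mathlib

open Real MeasureTheory Filter

/-- The partial derivative in the second variable of a `C³` function of two variables is `C²` in
the first variable. -/
lemma contDiff_deriv_snd {U : ℝ → ℝ → ℝ} (hU : ContDiff ℝ 3 (fun p : ℝ × ℝ => U p.1 p.2))
    (t : ℝ) : ContDiff ℝ 2 (fun z => deriv (fun s => U z s) t) := by
  have hpartial : (fun z => deriv (fun s => U z s) t) =
      fun z => fderiv ℝ (fun p : ℝ × ℝ => U p.1 p.2) (z, t) (0, 1) := by
    funext z
    have hline : HasDerivAt (fun s : ℝ => (z, s)) ((0 : ℝ), (1 : ℝ)) t :=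
      (hasDerivAt_const t z).prodMk (hasDerivAt_id t)
    have hfd : HasFDerivAt (fun p : ℝ × ℝ => U p.1 p.2)
        (fderiv ℝ (fun p : ℝ × ℝ => U p.1 p.2) (z, t)) (z, t) :=
      (hU.differentiable (by simp) (z, t)).hasFDerivAt
    exact (hfd.comp_hasDerivAt t hline).deriv
  rw [hpartial]
  have hfd : ContDiff ℝ 2 (fderiv ℝ (fun p : ℝ × ℝ => U p.1 p.2)) :=
    hU.fderiv_right (by norm_num)
  exact (hfd.comp (contDiff_id.prodMk contDiff_const)).clm_apply contDiff_const

/-- With `g = (U₀² - u²) / 2`, the expression in `u = U`, `v = Uₜ`, `w = Uₓₜ` whose `x`-derivative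
along a solution of the EW equation is `U² Uₜ`. -/
noncomputable def thirdInvariantFlux (μ U₀ u v w : ℝ) : ℝ :=
  U₀ ^ 2 * ((U₀ ^ 2 - u ^ 2) / 2 + μ * w) -
    (((U₀ ^ 2 - u ^ 2) / 2 + μ * w) ^ 2 - μ * v ^ 2)

lemma hasDerivAt_thirdInvariantFlux {μ : ℝ} (U₀ : ℝ) {u v w : ℝ → ℝ} {u' w' x : ℝ}
    (hu : HasDerivAt u u' x) (hv : HasDerivAt v (w x) x) (hw : HasDerivAt w w' x)
    (hEW : v x + u x * u' - μ * w' = 0) :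
    HasDerivAt (fun y => thirdInvariantFlux μ U₀ (u y) (v y) (w y)) (u x ^ 2 * v x) x := by
  have hp := (((hu.pow 2).const_sub (U₀ ^ 2)).div_const 2).add (hw.const_mul μ)
  have hF := (hp.const_mul (U₀ ^ 2)).sub ((hp.pow 2).sub ((hv.pow 2).const_mul μ))
  refine hF.congr_deriv ?_
  simp only [Pi.add_apply, Pi.pow_apply]
  push_cast
  have hw' : μ * w' = v x + u x * u' := by linarith
  rw [hw']
  ring

lemma tendsto_thirdInvariantFlux (μ U₀ : ℝ) {u v w : ℝ → ℝ} {a b c : ℝ} {l : Filter ℝ}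
    (hu : Tendsto u l (nhds a)) (hv : Tendsto v l (nhds b)) (hw : Tendsto w l (nhds c)) :
    Tendsto (fun x => thirdInvariantFlux μ U₀ (u x) (v x) (w x)) l
      (nhds (thirdInvariantFlux μ U₀ a b c)) := by
  have hp := (((hu.pow 2).const_sub (U₀ ^ 2)).div_const 2).add (hw.const_mul μ)
  exact (hp.const_mul (U₀ ^ 2)).sub ((hp.pow 2).sub ((hv.pow 2).const_mul μ))

/-- In the undular bore setting, the third invariant `I₃ = ∫ U³ dx` of the EW equation
increases at the constant rate `M₃ = (3/4)U₀⁴`: `∫ 3U²·Uₜ dx = (3/4)U₀⁴`. -/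
theorem ew_undular_bore_third_invariant_rate
    (μ U₀ : ℝ) (U : ℝ → ℝ → ℝ)
    (hreg : ContDiff ℝ (⊤ : ℕ∞) (fun p : ℝ × ℝ => U p.1 p.2))
    (hEW : ∀ x t : ℝ,
      deriv (fun s => U x s) t
        + U x t * deriv (fun y => U y t) x
        - μ * deriv (fun y => deriv (fun z => deriv (fun s => U z s) t) y) x = 0)
    (t : ℝ)
    (hint₁ : Integrable (fun x => deriv (fun s => U x s) t))
    (hint₂ : Integrable (fun x =>
      deriv (fun y => deriv (fun z => deriv (fun s => U z s) t) y) x))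
    (hint₃ : Integrable (fun x => (U x t) ^ 2 * deriv (fun s => U x s) t))
    (hUBot : Tendsto (fun x => U x t) atBot (nhds U₀))
    (hUTop : Tendsto (fun x => U x t) atTop (nhds 0))
    (hUtTop : Tendsto (fun x => deriv (fun s => U x s) t) atTop (nhds 0))
    (hUtBot : Tendsto (fun x => deriv (fun s => U x s) t) atBot (nhds 0))
    (hUxtTop : Tendsto (fun x => deriv (fun z => deriv (fun s => U z s) t) x)
      atTop (nhds 0))
    (hUxtBot : Tendsto (fun x => deriv (fun z => deriv (fun s => U z s) t) x)
      atBot (nhds 0))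
    (hg : ∀ x : ℝ,
      (∫ y in Set.Iic x,
        (deriv (fun s => U y s) t
          - μ * deriv (fun y' => deriv (fun z => deriv (fun s => U z s) t) y') y))
        = (U₀ ^ 2 - (U x t) ^ 2) / 2) :
    ∫ x : ℝ, 3 * (U x t) ^ 2 * deriv (fun s => U x s) t = (3 / 4) * U₀ ^ 4 := by
  have hv : ContDiff ℝ 2 (fun z => deriv (fun s => U z s) t) :=
    contDiff_deriv_snd (contDiff_infty.1 hreg 3) t
  have hU (x : ℝ) : HasDerivAt (fun y => U y t) (deriv (fun y => U y t) x) x := by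
    have h : Differentiable ℝ (fun y => U y t) :=
      (hreg.differentiable (by simp)).comp (differentiable_id.prodMk (differentiable_const t))
    exact (h x).hasDerivAt
  have hPDE := fun x => hEW x t
  set v : ℝ → ℝ := fun z => deriv (fun s => U z s) t
  have hv' (x : ℝ) : HasDerivAt v (deriv v x) x :=
    (hv.differentiable (by simp) x).hasDerivAt
  have hv'' (x : ℝ) : HasDerivAt (deriv v) (deriv (deriv v) x) x := by
    have h : ContDiff ℝ 1 (deriv v) := (contDiff_succ_iff_deriv.1 hv).2.2
    exact (h.differentiable (by simp) x).hasDerivAt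
  have hF (x : ℝ) := hasDerivAt_thirdInvariantFlux U₀ (hU x) (hv' x) (hv'' x) (hPDE x)
  have hkey := integral_of_hasDerivAt_of_tendsto hF hint₃
    (tendsto_thirdInvariantFlux μ U₀ hUBot hUtBot hUxtBot)
    (tendsto_thirdInvariantFlux μ U₀ hUTop hUtTop hUxtTop)
  simp only [mul_assoc]
  rw [integral_const_mul, hkey]
  unfold thirdInvariantFlux
  ring
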